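/- (Lattice thermodynamic limit of the correlation kernel) Let g : ℝ → ℝ be even and continuous with |g(u)| ≤ C/(1+u²) for some constant C > 0, let τ > 0, and define f^∞(t) := Σ_{s∈ℤ} g(τs) e^{2πist}. Assume f^∞(t) ≥ 0 for all t, and let z > 0. For each positive integer M let L^{(M)} be the M×M circulant matrix with entries L^{(M)}(j,l) = g( (τM/π) sin(π(j−l)/M) ). Then for all sufficiently large M, I_M + zL^{(M)} is invertible, and for fixed positive integers x, y the (x,y) entry of K^{(M)} := zL^{(M)}(I_M + zL^{(M)})^{-1} satisfies lim_{M→∞} K^{(M)}(x,y) = z ∫_{−1/2}^{1/2} e^{2πi(y−x)t} f^∞(t) / (1 + z f^∞(t)) dt. -/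

import Mathlib

open MeasureTheory Filter Topology

/-!
Sampling a continuous function on the circle at the `N`-th roots of unity, applying the inverse
discrete Fourier transform and forming a circulant matrix is a ring homomorphism from `C(ℝ/ℤ, ℂ)`
to `N × N` matrices, so it commutes with `L ↦ L (1 + L)⁻¹` and sends units to units. The symbols of
the finite matrices are trigonometric polynomials that converge uniformly to the limit symbol:
`|sin θ| ≥ 2|θ|/π` for `|θ| ≤ π/2` dominates their coefficients by a summable sequence. In the
Banach algebra `C(ℝ/ℤ, ℂ)` the units are open and inversion is continuous, so the symbols of the
kernels converge uniformly as well. The matrix entries are means of these symbols, times a fixed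
character, over the roots of unity, and such means converge to integrals.
-/

open scoped ZMod Matrix

section CorrelationKernel

variable {R S : Type*} [Ring R] [Ring S]

/-- The correlation kernel `K = L (1 + L)⁻¹` of the `L`-ensemble with kernel `L`, in an arbitrary
ring, so that it applies both to matrices and to their symbols. The inverse is
`Ring.inverse`, which is `0` off the units. -/
noncomputable def correlationKernel (a : R) : R := a * Ring.inverse (1 + a)

lemma map_correlationKernel (f : R →+* S) {a : R} (ha : IsUnit (1 + a)) :
    f (correlationKernel a) = correlationKernel (f a) := by
  have hfa : IsUnit (1 + f a) := by simpa using ha.map f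
  rw [correlationKernel, correlationKernel, Ring.eq_mul_inverse_iff_mul_eq _ _ _ hfa,
    ← map_one f, ← map_add, ← map_mul, Ring.inverse_mul_cancel_right _ _ ha]

lemma correlationKernel_matrix {n A : Type*} [Fintype n] [DecidableEq n] [CommRing A]
    (L : Matrix n n A) : correlationKernel L = L * (1 + L)⁻¹ := by
  rw [correlationKernel, Matrix.nonsing_inv_eq_ringInverse]

lemma correlationKernel_eq_div {K : Type*} [Field K] (a : K) :
    correlationKernel a = a / (1 + a) := by
  rw [correlationKernel, Ring.inverse_eq_inv, div_eq_mul_inv]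

lemma continuousAt_correlationKernel {A : Type*} [NormedRing A] [HasSummableGeomSeries A] {a : A}
    (ha : IsUnit (1 + a)) : ContinuousAt correlationKernel a := by
  obtain ⟨u, hu⟩ := ha
  have hinv : ContinuousAt Ring.inverse (1 + a) := hu ▸ NormedRing.inverse_continuousAt u
  exact continuousAt_id.mul (hinv.comp' (by fun_prop))

lemma eventually_isUnit_of_tendsto {ι A : Type*} [NormedRing A] [HasSummableGeomSeries A]
    {l : Filter ι} {F : ι → A} {a : A} (h : Tendsto F l (𝓝 a)) (ha : IsUnit a) :
    ∀ᶠ i in l, IsUnit (F i) :=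
  h.eventually (Units.isOpen.mem_nhds ha)

end CorrelationKernel

section Circulant

variable {N : ℕ} [NeZero N]

lemma dft_circulant_mulVec (v w : ZMod N → ℂ) : 𝓕 (Matrix.circulant v *ᵥ w) = 𝓕 v * 𝓕 w := by
  ext k
  simp only [ZMod.dft_apply, Matrix.mulVec, dotProduct, Matrix.circulant_apply, smul_eq_mul,
    Pi.mul_apply, Finset.mul_sum]
  rw [Finset.sum_comm]
  refine Finset.sum_congr rfl fun j _ => ?_
  rw [Finset.sum_mul]
  refine Fintype.sum_equiv (Equiv.subRight j) _ _ fun i => ?_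
  have hsplit : -(i * k) = -((i - j) * k) + -(j * k) := by ring
  rw [Equiv.subRight_apply, hsplit, AddChar.map_add_eq_mul]
  ring

lemma dft_single_zero_one : 𝓕 (Pi.single 0 1 : ZMod N → ℂ) = 1 := by
  ext k
  simp [ZMod.dft_apply, Pi.single_apply]

variable (N) in
/-- The circulant matrix of size `N` whose eigenvalue on the character `j ↦ e^{2πijk/N}` is the
value of the symbol `F` at `-k/N`, as a ring homomorphism in `F`. With this sign the Laurent
polynomial `∑ s, a s • fourier s` is sent to the circulant matrix of `a` reduced modulo `N`. -/
noncomputable def circulantOfSymbol : C(UnitAddCircle, ℂ) →+* Matrix (ZMod N) (ZMod N) ℂ where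
  toFun F := Matrix.circulant (𝓕⁻ fun k : ZMod N => F (-ZMod.toAddCircle k))
  map_one' := by
    rw [← Matrix.circulant_single_one, Matrix.circulant_inj]
    exact (LinearEquiv.symm_apply_eq _).2 dft_single_zero_one.symm
  map_mul' F G := by
    rw [Matrix.circulant_mul, Matrix.circulant_inj]
    refine (LinearEquiv.symm_apply_eq _).2 ?_
    rw [dft_circulant_mulVec]
    simp only [LinearEquiv.apply_symm_apply]
    rfl
  map_zero' := by
    rw [← Matrix.circulant_zero ℂ (ZMod N), Matrix.circulant_inj]
    exact map_zero _
  map_add' F G := by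
    rw [← Matrix.circulant_add, Matrix.circulant_inj]
    exact map_add _ (fun k : ZMod N => F (-ZMod.toAddCircle k)) _

lemma circulantOfSymbol_apply (F : C(UnitAddCircle, ℂ)) :
    circulantOfSymbol N F = Matrix.circulant (𝓕⁻ fun k : ZMod N => F (-ZMod.toAddCircle k)) := rfl

lemma fourier_toAddCircle (n : ℤ) (k : ZMod N) :
    fourier n (ZMod.toAddCircle k) = (ZMod.stdAddChar (n * k : ZMod N) : ℂ) := by
  rw [fourier_apply, ← map_zsmul, zsmul_eq_mul]
  rfl

variable (N) in
/-- The mean of a function over the `N`-th roots of unity `k/N` of the circle. -/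
noncomputable def sampleMean : C(UnitAddCircle, ℂ) →L[ℂ] ℂ :=
  (N : ℂ)⁻¹ • ∑ k : ZMod N, ContinuousMap.evalCLM ℂ (ZMod.toAddCircle k)

lemma sampleMean_apply (F : C(UnitAddCircle, ℂ)) :
    sampleMean N F = (N : ℂ)⁻¹ * ∑ k : ZMod N, F (ZMod.toAddCircle k) := by
  simp [sampleMean]

lemma circulantOfSymbol_intCast (F : C(UnitAddCircle, ℂ)) (x y : ℤ) :
    circulantOfSymbol N F x y = sampleMean N (fourier (-(x - y)) * F) := by
  rw [circulantOfSymbol_apply, Matrix.circulant_apply, ZMod.invDFT_apply, sampleMean_apply,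
    smul_eq_mul]
  congr 1
  refine Fintype.sum_equiv (Equiv.neg (ZMod N)) _ _ fun k => ?_
  have hphase : k * (x - y) = (-(x - y) : ℤ) * -k := by
    push_cast
    ring
  rw [ContinuousMap.mul_apply, fourier_toAddCircle, Equiv.neg_apply,
    map_neg (ZMod.toAddCircle (N := N)), smul_eq_mul, hphase]

lemma norm_sampleMean_le (F : C(UnitAddCircle, ℂ)) : ‖sampleMean N F‖ ≤ ‖F‖ := by
  have hN : (0 : ℝ) < N := Nat.cast_pos.2 (NeZero.pos N)
  rw [sampleMean_apply, norm_mul, norm_inv, Complex.norm_natCast, inv_mul_le_iff₀ hN]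
  calc ‖∑ k : ZMod N, F (ZMod.toAddCircle k)‖ ≤ ∑ _k : ZMod N, ‖F‖ :=
        norm_sum_le_of_le _ fun k _ => F.norm_coe_le_norm _
    _ = N * ‖F‖ := by simp [ZMod.card]

lemma sampleMean_fourier (n : ℤ) :
    sampleMean N (fourier n) = if (N : ℤ) ∣ n then 1 else 0 := by
  have hN : (N : ℂ) ≠ 0 := Nat.cast_ne_zero.2 (NeZero.ne N)
  simp_rw [sampleMean_apply, fourier_toAddCircle, mul_comm (n : ZMod N),
    AddChar.sum_mulShift _ (ZMod.isPrimitive_stdAddChar N), ZMod.card,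
    ZMod.intCast_zmod_eq_zero_iff_dvd]
  split_ifs <;> simp [hN]

end Circulant

section Limit

lemma integral_fourier (n : ℤ) :
    ∫ t : UnitAddCircle, fourier n t ∂AddCircle.haarAddCircle = if n = 0 then (1 : ℂ) else 0 := by
  split_ifs with hn
  · simp [hn]
  · exact integral_eq_zero_of_add_right_eq_neg (fourier_add_half_inv_index hn one_pos)

lemma continuous_integral_continuousMap {X E : Type*} [TopologicalSpace X] [CompactSpace X]
    [MeasurableSpace X] [BorelSpace X] [NormedAddCommGroup E] [NormedSpace ℝ E]
    [SecondCountableTopologyEither X E] (μ : Measure X) [IsFiniteMeasure μ] :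
    Continuous fun F : C(X, E) => ∫ t, F t ∂μ :=
  (continuous_integral.comp (ContinuousMap.toLp (E := E) 1 μ ℝ).continuous).congr fun F =>
    integral_congr_ae (F.coeFn_toLp μ)

variable {ι : Type*} {l : Filter ι} {N : ι → ℕ} [∀ i, NeZero (N i)]

lemma tendsto_sampleMean_fourier (hN : Tendsto N l atTop) (n : ℤ) :
    Tendsto (fun i => sampleMean (N i) (fourier n)) l
      (𝓝 (∫ t : UnitAddCircle, fourier n t ∂AddCircle.haarAddCircle)) := by
  refine tendsto_const_nhds.congr' ?_
  filter_upwards [hN.eventually_gt_atTop n.natAbs] with i hi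
  have hdvd : (N i : ℤ) ∣ n ↔ n = 0 :=
    ⟨fun h => Int.eq_zero_of_dvd_of_natAbs_lt_natAbs h hi, fun h => h ▸ dvd_zero _⟩
  simp_rw [integral_fourier, sampleMean_fourier, hdvd]

lemma tendsto_sampleMean (hN : Tendsto N l atTop) (F : C(UnitAddCircle, ℂ)) :
    Tendsto (fun i => sampleMean (N i) F) l (𝓝 (∫ t, F t ∂AddCircle.haarAddCircle)) := by
  have hequi : Equicontinuous fun i (F : C(UnitAddCircle, ℂ)) => sampleMean (N i) F :=
    (LipschitzWith.uniformEquicontinuous _ 1 fun i =>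
      AddMonoidHomClass.lipschitz_of_bound_nnnorm (sampleMean (N i)) 1 fun F => by
        rw [one_mul]
        exact norm_sampleMean_le F).equicontinuous
  have hclosed := hequi.isClosed_setOfPred_tendsto (l := l)
    (continuous_integral_continuousMap (E := ℂ) (AddCircle.haarAddCircle (T := 1)))
  have hF : F ∈ (Submodule.span ℂ (Set.range (fourier (T := 1)))).topologicalClosure := by
    rw [span_fourier_closure_eq_top]
    trivial
  refine closure_minimal (fun P hP => ?_) hclosed hF
  induction hP using Submodule.span_induction with
  | mem _ h =>
    obtain ⟨n, rfl⟩ := h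
    exact tendsto_sampleMean_fourier hN n
  | zero => simpa using tendsto_const_nhds
  | add P Q _ _ hP hQ =>
    have hint (P : C(UnitAddCircle, ℂ)) : Integrable P AddCircle.haarAddCircle :=
      P.continuous.integrable_of_hasCompactSupport (.of_compactSpace _)
    simpa [integral_add (hint P) (hint Q)] using hP.add hQ
  | smul c P _ hP => simpa [integral_const_mul] using hP.const_mul c

lemma tendsto_sampleMean_of_tendsto (hN : Tendsto N l atTop) {G : ι → C(UnitAddCircle, ℂ)}
    {F : C(UnitAddCircle, ℂ)} (hG : Tendsto G l (𝓝 F)) :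
    Tendsto (fun i => sampleMean (N i) (G i)) l (𝓝 (∫ t, F t ∂AddCircle.haarAddCircle)) := by
  have herr : Tendsto (fun i => sampleMean (N i) (G i - F)) l (𝓝 0) :=
    squeeze_zero_norm (fun i => norm_sampleMean_le _) (tendsto_iff_norm_sub_tendsto_zero.1 hG)
  simpa using herr.add (tendsto_sampleMean hN F)

end Limit

section Symbol

/-- The symbol `t ↦ ∑ s, a s e^{2πist}` of a coefficient sequence on `ℤ`. The series is taken in
`C(ℝ/ℤ, ℂ)`, so it is `0` if it is not summable there. -/
noncomputable def symbol (a : ℤ → ℂ) : C(UnitAddCircle, ℂ) := ∑' s, a s • fourier s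

lemma summable_smul_fourier {a : ℤ → ℂ} (ha : Summable a) :
    Summable fun s => a s • (fourier s : C(UnitAddCircle, ℂ)) :=
  .of_norm <| by simpa only [norm_smul, fourier_norm, mul_one] using ha.norm

lemma symbol_apply {a : ℤ → ℂ} (ha : Summable a) (t : UnitAddCircle) :
    symbol a t = ∑' s, a s * fourier s t :=
  (ContinuousMap.evalCLM ℂ t).map_tsum (summable_smul_fourier ha)

lemma tendsto_symbol {ι : Type*} {l : Filter ι} {a : ι → ℤ → ℂ} {a₀ : ℤ → ℂ} {b : ℤ → ℝ}
    (hb : Summable b) (hab : ∀ i s, ‖a i s‖ ≤ b s) (ha : ∀ s, Tendsto (a · s) l (𝓝 (a₀ s))) :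
    Tendsto (fun i => symbol (a i)) l (𝓝 (symbol a₀)) :=
  tendsto_tsum_of_dominated_convergence hb (fun s => (ha s).smul_const _)
    (.of_forall fun i s => by simpa only [norm_smul, fourier_norm, mul_one] using hab i s)

/-- The sequence on `ℤ` that carries `v : ZMod N → ℂ` on its window `(-N/2, N/2]` of
representatives and vanishes elsewhere. -/
noncomputable def unwrap {N : ℕ} (v : ZMod N → ℂ) : ℤ → ℂ := Function.extend ZMod.valMinAbs v 0

variable {N : ℕ}

lemma unwrap_of_notMem_range (v : ZMod N → ℂ) {s : ℤ}
    (hs : s ∉ Set.range (ZMod.valMinAbs (n := N))) : unwrap v s = 0 :=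
  Function.extend_apply' _ _ _ hs

lemma unwrap_valMinAbs (v : ZMod N → ℂ) (m : ZMod N) : unwrap v m.valMinAbs = v m :=
  ZMod.injective_valMinAbs.extend_apply _ _ _

variable [NeZero N]

lemma norm_unwrap_le {v : ZMod N → ℂ} {b : ℤ → ℝ} (hb : ∀ s, 0 ≤ b s)
    (hv : ∀ m, ‖v m‖ ≤ b m.valMinAbs) (s : ℤ) : ‖unwrap v s‖ ≤ b s := by
  by_cases hs : s ∈ Set.range (ZMod.valMinAbs (n := N))
  · obtain ⟨m, rfl⟩ := hs
    exact unwrap_valMinAbs v m ▸ hv m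
  · simpa [unwrap_of_notMem_range v hs] using hb s

lemma unwrap_intCast (v : ZMod N → ℂ) {s : ℤ} (hs : 2 * s.natAbs < N) : unwrap v s = v s := by
  have hval : (s : ZMod N).valMinAbs = s :=
    (ZMod.valMinAbs_spec _ _).2 ⟨rfl, by constructor <;> omega⟩
  rw [← unwrap_valMinAbs v s, hval]

lemma symbol_unwrap (v : ZMod N → ℂ) :
    symbol (unwrap v) = ∑ m : ZMod N, v m • fourier m.valMinAbs := by
  have hsupp : Function.support (fun s => unwrap v s • (fourier s : C(UnitAddCircle, ℂ))) ⊆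
      Set.range (ZMod.valMinAbs (n := N)) := fun s hs => by
    by_contra hrange
    exact hs (by simp only [unwrap_of_notMem_range v hrange, zero_smul ℂ (fourier s)])
  rw [symbol, ← ZMod.injective_valMinAbs.tsum_eq hsupp, tsum_fintype]
  simp_rw [unwrap_valMinAbs]

lemma circulantOfSymbol_symbol_unwrap (v : ZMod N → ℂ) :
    circulantOfSymbol N (symbol (unwrap v)) = Matrix.circulant v := by
  rw [circulantOfSymbol_apply, Matrix.circulant_inj]
  refine (LinearEquiv.symm_apply_eq _).2 (funext fun k => ?_)
  have hchar (m : ZMod N) : fourier m.valMinAbs (-ZMod.toAddCircle k) =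
      (ZMod.stdAddChar (-(m * k)) : ℂ) := by
    rw [← map_neg (ZMod.toAddCircle (N := N)), fourier_toAddCircle, ZMod.coe_valMinAbs, mul_neg]
  simp [symbol_unwrap, ZMod.dft_apply, hchar, mul_comm]

lemma tendsto_symbol_unwrap {ι : Type*} {l : Filter ι} {N : ι → ℕ} [∀ i, NeZero (N i)]
    (hN : Tendsto N l atTop) {v : ∀ i, ZMod (N i) → ℂ} {a : ℤ → ℂ} {b : ℤ → ℝ} (hb : Summable b)
    (hb₀ : ∀ s, 0 ≤ b s) (hvb : ∀ i m, ‖v i m‖ ≤ b m.valMinAbs)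
    (hva : ∀ s : ℤ, Tendsto (fun i => v i s) l (𝓝 (a s))) :
    Tendsto (fun i => symbol (unwrap (v i))) l (𝓝 (symbol a)) := by
  refine tendsto_symbol hb (fun i => norm_unwrap_le hb₀ (hvb i)) fun s => (hva s).congr' ?_
  filter_upwards [hN.eventually_gt_atTop (2 * s.natAbs)] with i hi
  exact (unwrap_intCast (v i) hi).symm

end Symbol

section ThermodynamicLimit

variable {ι : Type*} {l : Filter ι} {N : ι → ℕ} [∀ i, NeZero (N i)]
  {G : ι → C(UnitAddCircle, ℂ)} {F : C(UnitAddCircle, ℂ)}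

lemma eventually_isUnit_one_add_circulantOfSymbol (hG : Tendsto G l (𝓝 F)) (hF : IsUnit (1 + F)) :
    ∀ᶠ i in l, IsUnit (1 + circulantOfSymbol (N i) (G i)) := by
  filter_upwards [eventually_isUnit_of_tendsto (hG.const_add 1) hF] with i hi
  simpa using hi.map (circulantOfSymbol (N i))

lemma tendsto_correlationKernel_circulantOfSymbol (hN : Tendsto N l atTop)
    (hG : Tendsto G l (𝓝 F)) (hF : IsUnit (1 + F)) (x y : ℤ) :
    Tendsto (fun i => correlationKernel (circulantOfSymbol (N i) (G i)) x y) l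
      (𝓝 (fourierCoeff (correlationKernel F : C(UnitAddCircle, ℂ)) (x - y))) := by
  have hK : Tendsto (fun i => correlationKernel (G i)) l (𝓝 (correlationKernel F)) :=
    (continuousAt_correlationKernel hF).tendsto.comp hG
  refine (tendsto_sampleMean_of_tendsto hN (hK.const_mul (fourier (-(x - y))))).congr' ?_
  filter_upwards [eventually_isUnit_of_tendsto (hG.const_add 1) hF] with i hi
  rw [← circulantOfSymbol_intCast, map_correlationKernel _ hi]

lemma isUnit_one_add_of_forall_real (hF : ∀ t : ℝ, 1 + F t ≠ 0) : IsUnit (1 + F) :=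
  (ContinuousMap.isUnit_iff_forall_ne_zero _).2 (QuotientAddGroup.mk_surjective.forall.2 hF)

lemma fourierCoeff_correlationKernel (hF : IsUnit (1 + F)) {z : ℂ} {f : ℝ → ℂ}
    (hf : ∀ t : ℝ, F t = z * f t) (n : ℤ) :
    fourierCoeff (correlationKernel F : C(UnitAddCircle, ℂ)) n =
      z * ∫ t in (-(1 / 2) : ℝ)..(1 / 2 : ℝ),
        Complex.exp (2 * Real.pi * Complex.I * ((-n : ℤ) : ℂ) * t) * f t / (1 + z * f t) := by
  have hK (t : UnitAddCircle) : correlationKernel F t = F t / (1 + F t) := by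
    rw [← correlationKernel_eq_div]
    exact map_correlationKernel (ContinuousMap.evalAlgHom ℂ ℂ t : C(UnitAddCircle, ℂ) →+* ℂ) hF
  have hend : (-(1 / 2) : ℝ) + 1 = 1 / 2 := by norm_num
  rw [fourierCoeff_eq_intervalIntegral _ _ (-(1 / 2)), hend, one_div_one, one_smul,
    ← intervalIntegral.integral_const_mul]
  refine intervalIntegral.integral_congr fun t _ => ?_
  simp only [hK, hf, fourier_coe_apply, smul_eq_mul, Complex.ofReal_one, div_one]
  ring

end ThermodynamicLimit

section Lattice

/-- The `τ`-scaled chord `(τM/π) sin(πs/M)`, which replaces the distance `τs` on the ring of `M`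
sites. -/
noncomputable def chord (τ : ℝ) (M : ℕ) (s : ℤ) : ℝ :=
  τ * M / Real.pi * Real.sin (Real.pi * s / M)

variable {τ : ℝ} {g : ℝ → ℝ} {C : ℝ}

lemma tendsto_chord (τ : ℝ) (s : ℤ) : Tendsto (fun M => chord τ M s) atTop (𝓝 (τ * s)) := by
  have hangle : Tendsto (fun M : ℕ => Real.pi * (s : ℝ) / M) atTop (𝓝 0) :=
    tendsto_const_div_atTop_nhds_zero_nat _
  have hsinc : Tendsto (fun M : ℕ => τ * s * Real.sinc (Real.pi * s / M)) atTop (𝓝 (τ * s)) := by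
    simpa using ((Real.continuous_sinc.tendsto 0).comp hangle).const_mul (τ * s)
  refine hsinc.congr' ?_
  filter_upwards [eventually_ne_atTop 0] with M hM
  rcases eq_or_ne s 0 with rfl | hs
  · simp [chord]
  · rw [Real.sinc_of_ne_zero (by positivity), chord]
    field_simp

lemma mul_abs_le_abs_chord (hτ : 0 < τ) {M : ℕ} [NeZero M] {s : ℤ} (hs : 2 * s.natAbs ≤ M) :
    2 * τ / Real.pi * |(s : ℝ)| ≤ |chord τ M s| := by
  have hpi := Real.pi_pos
  have hM : (0 : ℝ) < M := Nat.cast_pos.2 (NeZero.pos M)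
  have hs' : 2 * |(s : ℝ)| ≤ M := by
    rw [← Int.cast_abs, Int.abs_eq_natAbs]
    exact_mod_cast hs
  have habs : |Real.pi * (s : ℝ) / M| = Real.pi * |(s : ℝ)| / M := by
    rw [abs_div, abs_mul, abs_of_pos hpi, abs_of_pos hM]
  have hsin := Real.mul_abs_le_abs_sin (x := Real.pi * (s : ℝ) / M) <| by
    rw [habs, div_le_div_iff₀ hM two_pos]
    nlinarith
  calc 2 * τ / Real.pi * |(s : ℝ)|
      = τ * M / Real.pi * (2 / Real.pi * |Real.pi * (s : ℝ) / M|) := by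
        rw [habs]
        field_simp
    _ ≤ τ * M / Real.pi * |Real.sin (Real.pi * s / M)| := by gcongr
    _ = |chord τ M s| := by rw [chord, abs_mul, abs_of_pos (a := τ * M / Real.pi) (by positivity)]

lemma abs_chord_congr (τ : ℝ) {M : ℕ} [NeZero M] {s t : ℤ} (h : (s : ZMod M) = t) :
    |chord τ M s| = |chord τ M t| := by
  have hM : (M : ℝ) ≠ 0 := Nat.cast_ne_zero.2 (NeZero.ne M)
  obtain ⟨n, hn⟩ := (ZMod.intCast_eq_intCast_iff_dvd_sub _ _ _).1 h
  obtain rfl : t = s + M * n := by linarith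
  have hangle : Real.pi * ((s + M * n : ℤ) : ℝ) / M = Real.pi * s / M + n * Real.pi := by
    push_cast
    field_simp
  rw [chord, chord, hangle, Real.sin_add_int_mul_pi, abs_mul, abs_mul, abs_mul, abs_neg_one_zpow,
    one_mul]

lemma nonneg_of_abs_le_div (hg : ∀ u, |g u| ≤ C / (1 + u ^ 2)) : 0 ≤ C := by
  simpa using (abs_nonneg _).trans (hg 0)

lemma summable_div_one_add_sq (C : ℝ) {a : ℝ} (ha : a ≠ 0) :
    Summable fun s : ℤ => C / (1 + (a * s) ^ 2) := by
  have hsq : Summable fun s : ℤ => |C| / a ^ 2 * (1 / (s : ℝ) ^ 2) :=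
    (Real.summable_one_div_int_pow.2 one_lt_two).mul_left _
  refine hsq.of_norm_bounded_eventually ?_
  filter_upwards [(Set.finite_singleton (0 : ℤ)).compl_mem_cofinite] with s (hs : s ≠ 0)
  rw [norm_div, Real.norm_eq_abs, Real.norm_of_nonneg (by positivity), div_mul_div_comm, mul_one,
    ← mul_pow]
  gcongr
  linarith

/-- The generator `m ↦ g ((τM/π) sin(πm/M))` of the lattice circulant of size `M`, evaluated on
the representative of `m` of least absolute value. -/
noncomputable def latticeGenerator (g : ℝ → ℝ) (τ : ℝ) (M : ℕ) (m : ZMod M) : ℂ :=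
  g (chord τ M m.valMinAbs)

lemma latticeGenerator_intCast (hg : ∀ u, g (-u) = g u) (τ : ℝ) (M : ℕ) [NeZero M] (s : ℤ) :
    latticeGenerator g τ M s = g (chord τ M s) := by
  have habs : ∀ u, g |u| = g u := fun u => by rcases abs_choice u with h | h <;> simp [h, hg]
  rw [latticeGenerator, ← habs, abs_chord_congr τ (ZMod.coe_valMinAbs _), habs]

lemma norm_latticeGenerator_le (hg : ∀ u, |g u| ≤ C / (1 + u ^ 2)) (hτ : 0 < τ) {M : ℕ} [NeZero M]
    (m : ZMod M) :
    ‖latticeGenerator g τ M m‖ ≤ C / (1 + (2 * τ / Real.pi * m.valMinAbs) ^ 2) := by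
  have hC : 0 ≤ C := nonneg_of_abs_le_div hg
  have hchord := mul_abs_le_abs_chord hτ (M := M) (s := m.valMinAbs) <| by
    have := m.natAbs_valMinAbs_le
    omega
  rw [latticeGenerator, Complex.norm_real]
  refine (hg _).trans ?_
  gcongr C / (1 + ?_)
  rw [sq_le_sq, abs_mul, abs_of_pos (by positivity)]
  exact hchord

lemma tendsto_symbol_latticeGenerator (hg_even : ∀ u, g (-u) = g u)
    (hg_bound : ∀ u, |g u| ≤ C / (1 + u ^ 2)) (hτ : 0 < τ)
    (hg_cont : ∀ s : ℤ, ContinuousAt g (τ * s)) {ι : Type*} {l : Filter ι} {N : ι → ℕ}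
    [∀ i, NeZero (N i)] (hN : Tendsto N l atTop) :
    Tendsto (fun i => symbol (unwrap (latticeGenerator g τ (N i)))) l
      (𝓝 (symbol fun s => g (τ * s))) := by
  have hC := nonneg_of_abs_le_div hg_bound
  refine tendsto_symbol_unwrap hN (summable_div_one_add_sq C (a := 2 * τ / Real.pi) (by positivity))
    (fun s => by positivity) (fun i => norm_latticeGenerator_le hg_bound hτ) fun s => ?_
  simp_rw [latticeGenerator_intCast hg_even]
  exact (Complex.continuous_ofReal.tendsto _).comp
    ((hg_cont s).tendsto.comp ((tendsto_chord τ s).comp hN))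

lemma symbol_lattice_apply (hg_bound : ∀ u, |g u| ≤ C / (1 + u ^ 2)) (hτ : τ ≠ 0) (t : ℝ) :
    symbol (fun s => g (τ * s)) (t : UnitAddCircle) =
      ∑' s : ℤ, (g (τ * s) : ℂ) * Complex.exp (2 * Real.pi * Complex.I * s * t) := by
  have hsum : Summable fun s : ℤ => (g (τ * s) : ℂ) :=
    (summable_div_one_add_sq C hτ).of_norm_bounded fun s => by
      simpa only [Complex.norm_real, Real.norm_eq_abs] using hg_bound (τ * s)
  simp_rw [symbol_apply hsum, fourier_coe_apply, Complex.ofReal_one, div_one]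

end Lattice

section FinToZMod

/-- Real matrices on the sites `0, …, M - 1` as complex matrices on `ZMod M`. -/
noncomputable def finToZMod (M : ℕ) [NeZero M] :
    Matrix (Fin M) (Fin M) ℝ →+* Matrix (ZMod M) (ZMod M) ℂ :=
  ((Matrix.reindexRingEquiv ℂ (ZMod.finEquiv M).toEquiv : _ ≃+* _) : _ →+* _).comp
    Complex.ofRealHom.mapMatrix

variable {M : ℕ} [NeZero M]

open scoped Fin.CommRing in
lemma finEquiv_eq_natCast (j : Fin M) : ZMod.finEquiv M j = ((j : ℕ) : ZMod M) :=
  (congrArg (ZMod.finEquiv M) (Fin.cast_val_eq_self j).symm).trans (map_natCast _ _)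

lemma finToZMod_natCast (A : Matrix (Fin M) (Fin M) ℝ) (j l : Fin M) :
    finToZMod M A (j : ℕ) (l : ℕ) = A j l := by
  simp [finToZMod, ← finEquiv_eq_natCast]

lemma isUnit_finToZMod_iff (A : Matrix (Fin M) (Fin M) ℝ) : IsUnit (finToZMod M A) ↔ IsUnit A := by
  simp only [finToZMod, RingHom.comp_apply, RingHom.coe_coe, isUnit_map_iff,
    Matrix.isUnit_iff_isUnit_det, ← RingHom.map_det]

lemma finToZMod_eq_circulant {A : Matrix (Fin M) (Fin M) ℝ} {v : ZMod M → ℂ}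
    (h : ∀ j l : Fin M, (A j l : ℂ) = v ((j : ℕ) - (l : ℕ))) :
    finToZMod M A = Matrix.circulant v := by
  ext i k
  obtain ⟨j, rfl⟩ := (ZMod.finEquiv M).surjective i
  obtain ⟨l, rfl⟩ := (ZMod.finEquiv M).surjective k
  rw [finEquiv_eq_natCast, finEquiv_eq_natCast, finToZMod_natCast, h, Matrix.circulant_apply]

section SymbolLimit

variable {A : ∀ M, Matrix (Fin M) (Fin M) ℝ} {G : ℕ → C(UnitAddCircle, ℂ)} {F : C(UnitAddCircle, ℂ)}
  (hA : ∀ (M : ℕ) [NeZero M], finToZMod M (A M) = circulantOfSymbol M (G M))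
  (hG : Tendsto G atTop (𝓝 F)) (hF : IsUnit (1 + F))
include hA hG hF

lemma eventually_isUnit_one_add_of_tendsto_symbol : ∀ᶠ M in atTop, IsUnit (1 + A M) := by
  rw [← map_add_atTop_eq_nat 1, eventually_map]
  filter_upwards [eventually_isUnit_one_add_circulantOfSymbol (N := (· + 1))
    ((tendsto_add_atTop_iff_nat 1).2 hG) hF] with n hn
  rwa [← hA, ← map_one (finToZMod _), ← map_add, isUnit_finToZMod_iff] at hn

lemma tendsto_correlationKernel_of_tendsto_symbol (x y : ℕ) :
    Tendsto (fun M => if h : x < M ∧ y < M then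
        ((correlationKernel (A M) ⟨x, h.1⟩ ⟨y, h.2⟩ : ℝ) : ℂ) else 0) atTop
      (𝓝 (fourierCoeff (correlationKernel F : C(UnitAddCircle, ℂ)) (x - y))) := by
  have hunit := eventually_isUnit_one_add_of_tendsto_symbol hA hG hF
  rw [← map_add_atTop_eq_nat 1, eventually_map] at hunit
  rw [← map_add_atTop_eq_nat 1, tendsto_map'_iff]
  refine (tendsto_correlationKernel_circulantOfSymbol (tendsto_add_atTop_nat 1)
    ((tendsto_add_atTop_iff_nat 1).2 hG) hF x y).congr' ?_
  filter_upwards [hunit, eventually_ge_atTop (x + y)] with n hn hxy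
  have hlt : x < n + 1 ∧ y < n + 1 := by omega
  rw [Function.comp_apply, dif_pos hlt, ← finToZMod_natCast, map_correlationKernel _ hn, hA]
  simp

end SymbolLimit

end FinToZMod

lemma finToZMod_eq_circulantOfSymbol {g : ℝ → ℝ} (hg : ∀ u, g (-u) = g u) {τ : ℝ} {M : ℕ}
    [NeZero M] {A : Matrix (Fin M) (Fin M) ℝ} (hA : ∀ j l : Fin M, A j l = g (chord τ M (j - l))) :
    finToZMod M A = circulantOfSymbol M (symbol (unwrap (latticeGenerator g τ M))) := by
  rw [circulantOfSymbol_symbol_unwrap]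
  refine finToZMod_eq_circulant fun j l => ?_
  rw [hA, ← latticeGenerator_intCast hg]
  push_cast
  rfl

theorem lattice_thermodynamic_limit_kernel_general (g : ℝ → ℝ)
    (hg_even : ∀ u : ℝ, g (-u) = g u)
    (C : ℝ) (hg_bound : ∀ u : ℝ, |g u| ≤ C / (1 + u ^ 2))
    (τ : ℝ) (hτ : 0 < τ) (hg_cont : ∀ s : ℤ, ContinuousAt g (τ * s))
    (finf : ℝ → ℝ)
    (hfinf : ∀ t : ℝ, (finf t : ℂ) =
      ∑' s : ℤ, (g (τ * s) : ℂ) * Complex.exp (2 * Real.pi * Complex.I * (s : ℂ) * (t : ℂ)))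
    (z : ℝ) (hz : ∀ t : ℝ, 1 + z * finf t ≠ 0)
    (Lmat : (M : ℕ) → Matrix (Fin M) (Fin M) ℝ)
    (hLmat : ∀ (M : ℕ) (j l : Fin M),
      Lmat M j l = g ((τ * M / Real.pi) * Real.sin (Real.pi * ((j : ℝ) - (l : ℝ)) / M)))
    (x y : ℕ) :
    (∀ᶠ M : ℕ in atTop, IsUnit (1 + z • Lmat M)) ∧
      Tendsto (fun M : ℕ =>
          if h : x < M ∧ y < M then
            ((((z • Lmat M) * (1 + z • Lmat M)⁻¹) ⟨x, h.1⟩ ⟨y, h.2⟩ : ℝ) : ℂ)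
          else 0)
        atTop
        (𝓝 ((z : ℂ) * ∫ t in (-(1/2) : ℝ)..(1/2 : ℝ),
            Complex.exp (2 * Real.pi * Complex.I * ((y : ℂ) - (x : ℂ)) * (t : ℂ)) * (finf t : ℂ)
              / (1 + (z : ℂ) * (finf t : ℂ)))) := by
  let h (u : ℝ) : ℝ := z * g u
  have h_even (u : ℝ) : h (-u) = h u := by simp only [h, hg_even]
  have h_bound (u : ℝ) : |h u| ≤ |z| * C / (1 + u ^ 2) := by
    rw [abs_mul, mul_div_assoc]
    exact mul_le_mul_of_nonneg_left (hg_bound u) (abs_nonneg z)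
  let F : C(UnitAddCircle, ℂ) := symbol fun s => h (τ * s)
  have hF (t : ℝ) : F t = z * finf t := by
    rw [hfinf, ← tsum_mul_left]
    refine (symbol_lattice_apply h_bound hτ.ne' t).trans (tsum_congr fun s => ?_)
    rw [Complex.ofReal_mul, mul_assoc]
  have hunit : IsUnit (1 + F) :=
    isUnit_one_add_of_forall_real fun t => by
      rw [hF]
      exact_mod_cast hz t
  have hA (M : ℕ) [NeZero M] : finToZMod M (z • Lmat M) =
      circulantOfSymbol M (symbol (unwrap (latticeGenerator h τ M))) :=
    finToZMod_eq_circulantOfSymbol h_even fun j l => by simp [h, hLmat, chord]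
  have hG : Tendsto (fun M => symbol (unwrap (latticeGenerator h τ M))) atTop (𝓝 F) :=
    (tendsto_add_atTop_iff_nat 1).1 (tendsto_symbol_latticeGenerator h_even h_bound hτ
      (fun s => (hg_cont s).const_mul z) (tendsto_add_atTop_nat 1))
  refine ⟨eventually_isUnit_one_add_of_tendsto_symbol hA hG hunit, ?_⟩
  have hlim := tendsto_correlationKernel_of_tendsto_symbol hA hG hunit x y
  rw [fourierCoeff_correlationKernel hunit hF] at hlim
  simpa only [correlationKernel_matrix, neg_sub, Int.cast_sub, Int.cast_natCast] using hlim

/-- lattice thermodynamic limit of the correlation kernel: in the setting of the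
lattice circulant `L`-ensemble with entries `L^{(M)}(j,l) = g((τM/π) sin(π(j-l)/M))`, symbol
`f^∞(t) = Σ_{s∈ℤ} g(τs) e^{2πist} ≥ 0` and fugacity `z > 0`, the matrix `I + zL^{(M)}` is
invertible for all sufficiently large `M`, and for fixed positive integers `x, y` the `(x,y)`
entry of `K^{(M)} = zL^{(M)}(I + zL^{(M)})⁻¹` satisfies
`lim_{M→∞} K^{(M)}(x,y) = z ∫_{-1/2}^{1/2} e^{2πi(y-x)t} f^∞(t)/(1 + z f^∞(t)) dt`. -/
theorem lattice_thermodynamic_limit_kernel (g : ℝ → ℝ)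
    (hg_even : ∀ u : ℝ, g (-u) = g u) (hg_cont : Continuous g)
    (C : ℝ) (hC : 0 < C) (hg_bound : ∀ u : ℝ, |g u| ≤ C / (1 + u ^ 2))
    (τ : ℝ) (hτ : 0 < τ)
    (finf : ℝ → ℝ)
    (hfinf : ∀ t : ℝ, (finf t : ℂ) =
      ∑' s : ℤ, (g (τ * s) : ℂ) * Complex.exp (2 * Real.pi * Complex.I * (s : ℂ) * (t : ℂ)))
    (hfinf_pos : ∀ t : ℝ, 0 ≤ finf t)
    (z : ℝ) (hz : 0 < z)
    (Lmat : (M : ℕ) → Matrix (Fin M) (Fin M) ℝ)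
    (hLmat : ∀ (M : ℕ) (j l : Fin M),
      Lmat M j l = g ((τ * M / Real.pi) * Real.sin (Real.pi * ((j : ℝ) - (l : ℝ)) / M)))
    (x y : ℕ) (hx : 0 < x) (hy : 0 < y) :
    (∀ᶠ M : ℕ in atTop, IsUnit (1 + z • Lmat M)) ∧
      Tendsto (fun M : ℕ =>
          if h : x ≤ M ∧ y ≤ M then
            ((((z • Lmat M) * (1 + z • Lmat M)⁻¹) ⟨x - 1, by omega⟩ ⟨y - 1, by omega⟩ : ℝ) : ℂ)
          else 0)
        atTop
        (𝓝 ((z : ℂ) * ∫ t in (-(1/2) : ℝ)..(1/2 : ℝ),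
            Complex.exp (2 * Real.pi * Complex.I * ((y : ℂ) - (x : ℂ)) * (t : ℂ)) * (finf t : ℂ)
              / (1 + (z : ℂ) * (finf t : ℂ)))) := by
  obtain ⟨x, rfl⟩ := Nat.exists_eq_succ_of_ne_zero hx.ne'
  obtain ⟨y, rfl⟩ := Nat.exists_eq_succ_of_ne_zero hy.ne'
  have hpos (t : ℝ) : 1 + z * finf t ≠ 0 := by
    have := hfinf_pos t
    positivity
  simp_rw [Nat.cast_succ, add_sub_add_right_eq_sub]
  exact lattice_thermodynamic_limit_kernel_general g hg_even C hg_bound τ hτ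
    (fun _ => hg_cont.continuousAt) finf hfinf z hpos Lmat hLmat x y
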